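/- Let f be a regular probability density on [l,h] with 0 < l ≤ h < ∞, and define ψ(t) := 2∫_{t'≥t} f(t')/t' dt' − (1/t)·∫_{t'≥t} f(t') dt'. Then the set {t ∈ [l,h] : ψ(t) ≥ 0} is order-convex (an interval): whenever l ≤ t₁ ≤ t₂ ≤ t₃ ≤ h with ψ(t₁) ≥ 0 and ψ(t₃) ≥ 0, also ψ(t₂) ≥ 0. -/

import Mathlib

open MeasureTheory Set

/-!
Where `f` is continuous and positive, `ψ' t = -(f t / t ^ 2) * φ t`. The virtual value `φ` changes
sign at most once, from negative to nonnegative, so `ψ` first increases and then decreases; hence it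
is quasiconcave, and its superlevel sets are intervals.
-/

theorem quasiconcaveOn_of_hasDerivAt_of_monotoneOn_nonpos {s : Set ℝ} {g g' : ℝ → ℝ}
    (hs : Convex ℝ s) (hg : ContinuousOn g s)
    (hg' : ∀ x ∈ interior s, HasDerivAt g (g' x) x)
    (hsign : MonotoneOn (fun x => g' x ≤ 0) (interior s)) :
    QuasiconcaveOn ℝ s g := by
  refine fun r => convex_iff_ordConnected.2 <| ordConnected_of_Ioo fun a ha b hb _ c hc => ?_
  have hsub : Icc a b ⊆ s := hs.ordConnected.out ha.1 hb.1
  have hint : Ioo a b ⊆ interior s :=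
    interior_maximal (Ioo_subset_Icc_self.trans hsub) isOpen_Ioo
  refine ⟨hsub (Ioo_subset_Icc_self hc), ?_⟩
  rcases le_or_gt (g' c) 0 with hc_nonpos | hc_pos
  · have hsub_right : Ioo c b ⊆ Ioo a b := Ioo_subset_Ioo_left hc.1.le
    have hanti : AntitoneOn g (Icc c b) := by
      refine antitoneOn_of_hasDerivWithinAt_nonpos (f' := g') (convex_Icc c b)
        (hg.mono ((Icc_subset_Icc_left hc.1.le).trans hsub)) ?_ ?_ <;> rw [interior_Icc]
      · exact fun x hx => (hg' x (hint (hsub_right hx))).hasDerivWithinAt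
      · exact fun x hx => hsign (hint hc) (hint (hsub_right hx)) hx.1.le hc_nonpos
    exact hb.2.trans (hanti (left_mem_Icc.2 hc.2.le) (right_mem_Icc.2 hc.2.le) hc.2.le)
  · have hsub_left : Ioo a c ⊆ Ioo a b := Ioo_subset_Ioo_right hc.2.le
    have hmono : MonotoneOn g (Icc a c) := by
      refine monotoneOn_of_hasDerivWithinAt_nonneg (f' := g') (convex_Icc a c)
        (hg.mono ((Icc_subset_Icc_right hc.2.le).trans hsub)) ?_ ?_ <;> rw [interior_Icc]
      · exact fun x hx => (hg' x (hint (hsub_left hx))).hasDerivWithinAt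
      · refine fun x hx => le_of_not_ge fun hx_nonpos => hc_pos.not_ge ?_
        exact hsign (hint (hsub_left hx)) (hint hc) hx.2.le hx_nonpos
    exact ha.2.trans (hmono (left_mem_Icc.2 hc.1.le) (right_mem_Icc.2 hc.1.le) hc.1.le)

theorem hasDerivAt_setIntegral_Ici {E : Type*} [NormedAddCommGroup E] [NormedSpace ℝ E]
    [CompleteSpace E] {g : ℝ → E} {a t : ℝ} (hg : IntegrableOn g (Ici a)) (hat : a < t)
    (hgt : ContinuousAt g t) :
    HasDerivAt (fun u => ∫ x in Ici u, g x) (-g t) t := by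
  have hprimitive : HasDerivAt (fun u => ∫ x in a..u, g x) (g t) t := by
    refine intervalIntegral.integral_hasDerivAt_right ?_ ?_ hgt
    · exact (intervalIntegrable_iff_integrableOn_Icc_of_le hat.le).2
        (hg.mono_set Icc_subset_Ici_self)
    · exact ⟨Ici a, Ici_mem_nhds hat, hg.aestronglyMeasurable⟩
  refine (hprimitive.const_sub (∫ x in Ici a, g x)).congr_of_eventuallyEq ?_
  filter_upwards [Ici_mem_nhds hat] with u hu
  rw [← intervalIntegral.integral_Ici_sub_Ici' hg (hg.mono_set (Ici_subset_Ici.2 hu)),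
    sub_sub_cancel]

theorem continuousAt_setIntegral_Ici {E : Type*} [NormedAddCommGroup E] [NormedSpace ℝ E]
    {g : ℝ → E} {a t : ℝ} (hg : IntegrableOn g (Ici a)) (hat : a < t) :
    ContinuousAt (fun u => ∫ x in Ici u, g x) t :=
  hg.continuousOn_Ici_primitive_Ici.continuousAt (Ici_mem_nhds hat)

theorem integrableOn_Ici_div_id {f : ℝ → ℝ} {a : ℝ} (ha : 0 < a) (hf : IntegrableOn f (Ici a)) :
    IntegrableOn (fun x => f x / x) (Ici a) := by
  simp only [div_eq_inv_mul]
  refine hf.bdd_mul (c := a⁻¹) measurable_inv.aestronglyMeasurable ?_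
  filter_upwards [ae_restrict_mem measurableSet_Ici] with x hx
  rw [norm_inv, Real.norm_of_nonneg (ha.le.trans hx)]
  exact inv_anti₀ ha hx

/-- The virtual value `φ` of a probability density `f`, with the CDF of `f` written out as an
integral. Where `f t = 0`, division by zero makes it `t`. -/
noncomputable def virtualValue (f : ℝ → ℝ) (t : ℝ) : ℝ :=
  t - (1 - ∫ x in Iic t, f x) / f t

/-- The function `ψ` of a density `f`, whose sign on the positive reals is studied. It is meant for
`0 < t`; for `t ≤ 0` the first integral need not converge. -/
noncomputable def psi (f : ℝ → ℝ) (t : ℝ) : ℝ :=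
  2 * (∫ x in Ici t, f x / x) - (1 / t) * ∫ x in Ici t, f x

section

variable {f : ℝ → ℝ} {t : ℝ}

theorem continuousAt_psi (hf : Integrable f) (ht : 0 < t) : ContinuousAt (psi f) t := by
  have hdiv := integrableOn_Ici_div_id (half_pos ht) hf.integrableOn
  exact (continuousAt_const.mul (continuousAt_setIntegral_Ici hdiv (half_lt_self ht))).sub
    ((continuousAt_const.div continuousAt_id ht.ne').mul
      (continuousAt_setIntegral_Ici hf.integrableOn (half_lt_self ht)))

theorem hasDerivAt_psi (hf : Integrable f) (ht : 0 < t) (hft : ContinuousAt f t) :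
    HasDerivAt (psi f) (((∫ x in Ici t, f x) - t * f t) / t ^ 2) t := by
  have hdiv := integrableOn_Ici_div_id (half_pos ht) hf.integrableOn
  have htail := hasDerivAt_setIntegral_Ici hf.integrableOn (half_lt_self ht) hft
  have htail_div := hasDerivAt_setIntegral_Ici hdiv (half_lt_self ht)
    (hft.div continuousAt_id ht.ne')
  have hone_div : HasDerivAt (fun u : ℝ => 1 / u) (-(t ^ 2)⁻¹) t := by
    simpa only [one_div] using hasDerivAt_inv ht.ne'
  refine ((htail_div.const_mul 2).sub (hone_div.mul htail)).congr_deriv ?_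
  field_simp
  ring

theorem integral_Ici_eq_mul_sub_virtualValue (hf_prob : ∫ x, f x = 1) (hft : f t ≠ 0) :
    ∫ x in Ici t, f x = f t * (t - virtualValue f t) := by
  have hf : Integrable f := integrable_of_integral_eq_one hf_prob
  have htail : 1 - ∫ x in Iic t, f x = ∫ x in Ici t, f x := by
    rw [← hf_prob, integral_Ici_eq_integral_Ioi, sub_eq_iff_eq_add',
      intervalIntegral.integral_Iic_add_Ioi hf.integrableOn hf.integrableOn]
  rw [virtualValue, htail, sub_sub_cancel, mul_div_cancel₀ _ hft]

theorem hasDerivAt_psi_of_integral_eq_one (hf_prob : ∫ x, f x = 1) (ht : 0 < t)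
    (hf_cont : ContinuousAt f t) (hft : f t ≠ 0) :
    HasDerivAt (psi f) (-(f t / t ^ 2 * virtualValue f t)) t := by
  have hf : Integrable f := integrable_of_integral_eq_one hf_prob
  refine (hasDerivAt_psi hf ht hf_cont).congr_deriv ?_
  rw [integral_Ici_eq_mul_sub_virtualValue hf_prob hft]
  ring

theorem psi_nonneg_order_convex_general {s : Set ℝ} (hs : Convex ℝ s) (hs_pos : s ⊆ Ioi 0)
    (hf_prob : ∫ x, f x = 1) (hf_cont : ContinuousOn f (interior s))
    (hf_pos : ∀ t ∈ interior s, 0 < f t)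
    (hf_cross : MonotoneOn (fun t => 0 ≤ virtualValue f t) (interior s)) :
    QuasiconcaveOn ℝ s (psi f) := by
  have hf : Integrable f := integrable_of_integral_eq_one hf_prob
  have ht_pos : ∀ t ∈ interior s, 0 < t := fun t ht => hs_pos (interior_subset ht)
  have hsign : ∀ t ∈ interior s,
      -(f t / t ^ 2 * virtualValue f t) ≤ 0 ↔ 0 ≤ virtualValue f t := fun t ht => by
    rw [neg_nonpos, mul_nonneg_iff_of_pos_left (div_pos (hf_pos t ht) (pow_pos (ht_pos t ht) 2))]
  refine quasiconcaveOn_of_hasDerivAt_of_monotoneOn_nonpos hs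
    (fun t ht => (continuousAt_psi hf (hs_pos ht)).continuousWithinAt)
    (fun t ht => hasDerivAt_psi_of_integral_eq_one hf_prob (ht_pos t ht)
      (hf_cont.continuousAt (isOpen_interior.mem_nhds ht)) (hf_pos t ht).ne') ?_
  exact hf_cross.congr fun t ht => propext (hsign t ht).symm

end

/-- For a regular probability density `f` on `[l,h]` with `0 < l ≤ h < ∞`, the set
`{t ∈ [l,h] : ψ t ≥ 0}` is order-convex, where
`ψ t = 2∫_{t'≥t} f t'/t' dt' − (1/t)·∫_{t'≥t} f t' dt'`: whenever
`l ≤ t₁ ≤ t₂ ≤ t₃ ≤ h` with `ψ t₁ ≥ 0` and `ψ t₃ ≥ 0`, also `ψ t₂ ≥ 0`. -/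
theorem psi_nonneg_order_convex
    (f : ℝ → ℝ) (l h : ℝ) (hl : 0 < l) (hlh : l ≤ h)
    (hf_nonneg : ∀ t, 0 ≤ f t)
    (hf_supp : Function.support f = Icc l h)
    (hf_cont : ContinuousOn f (Icc l h))
    (hf_pos : ∀ t ∈ Icc l h, 0 < f t)
    (hf_prob : ∫ t, f t = 1)
    (hf_reg : MonotoneOn (fun t => t - (1 - ∫ t' in Iic t, f t') / f t) (Icc l h))
    (ψ : ℝ → ℝ)
    (hψ : ∀ t : ℝ, 0 < t →
      ψ t = 2 * (∫ t' in Ici t, f t' / t') - (1 / t) * ∫ t' in Ici t, f t') :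
    ∀ t₁ t₂ t₃ : ℝ, l ≤ t₁ → t₁ ≤ t₂ → t₂ ≤ t₃ → t₃ ≤ h →
      0 ≤ ψ t₁ → 0 ≤ ψ t₃ → 0 ≤ ψ t₂ := by
  intro t₁ t₂ t₃ h1 h12 h23 h3
  have hquasi : QuasiconcaveOn ℝ (Icc l h) (psi f) :=
    psi_nonneg_order_convex_general (convex_Icc l h) (fun t ht => hl.trans_le ht.1) hf_prob
      (hf_cont.mono interior_subset) (fun t ht => hf_pos t (interior_subset ht))
      fun a ha b hb hab hφ => hφ.trans (hf_reg (interior_subset ha) (interior_subset hb) hab)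
  rw [hψ t₁ (by linarith), hψ t₂ (by linarith), hψ t₃ (by linarith)]
  exact fun hp1 hp3 => ((hquasi 0).ordConnected.out ⟨⟨h1, by linarith⟩, hp1⟩
    ⟨⟨by linarith, h3⟩, hp3⟩ ⟨h12, h23⟩).2
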